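/- arXiv:2405.03508 — 2 statements merged into one kernel-verified Lean document; each statement's English description precedes it below -/
import Mathlib

section
/- The following are equivalent: (1) the orbit 𝒪 is finite; (2) there exists a subfield M of 𝕂 containing k(x) and k(y) that is a finite Galois extension of k(x) and of k(y) and such that the subgroup of Aut(M) generated by Gal(M|k(x)) and Gal(M|k(y)) is finite; (3) k is a proper subfield of k(x) ∩ k(y), i.e. there exists a nontrivial Galois invariant. -/
open IntermediateField
open scoped BigOperators Classical

set_option synthInstance.maxHeartbeats 1000000
set_option maxHeartbeats 1600000

noncomputable section

namespace QuadrantWalk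

variable {K : Type} [Field K] [Algebra ℂ K]

/-- Evaluation of the step (Laurent) polynomial `S(X,Y) = ∑ w_{i,j} X^i Y^j`
    at a pair of elements of a field. -/
def stepEval (St : Finset (ℤ × ℤ)) (w : ℤ × ℤ → ℂ) (u v : K) : K :=
  ∑ p ∈ St, algebraMap ℂ K (w p) * u ^ p.1 * v ^ p.2

/-- The step polynomial involves both `X` and `Y`. -/
def NotUnivariate (St : Finset (ℤ × ℤ)) : Prop :=
  (∃ p ∈ St, ∃ q ∈ St, p.1 ≠ q.1) ∧ ∃ p ∈ St, ∃ q ∈ St, p.2 ≠ q.2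

/-- The kernel polynomial `K̃(X,Y,t) = X^mx * Y^my * (1 - t·S(X,Y))` as an element of
`ℂ[X,Y,t]`, with variables `0 ↦ X`, `1 ↦ Y`, `2 ↦ t`. -/
def kernelPoly (St : Finset (ℤ × ℤ)) (w : ℤ × ℤ → ℂ) (mx my : ℕ) :
    MvPolynomial (Fin 3) ℂ :=
  MvPolynomial.X 0 ^ mx * MvPolynomial.X 1 ^ my -
    MvPolynomial.X 2 *
      ∑ p ∈ St, MvPolynomial.C (w p) *
        MvPolynomial.X 0 ^ (p.1 + (mx : ℤ)).toNat *
        MvPolynomial.X 1 ^ (p.2 + (my : ℤ)).toNat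

/-- `-mx` (resp. `-my`) is the smallest `X`-exponent (resp. `Y`-exponent) of the model. -/
structure ExponentBounds (St : Finset (ℤ × ℤ)) (mx my : ℕ) : Prop where
  lowerX : ∀ p ∈ St, -(mx : ℤ) ≤ p.1
  lowerY : ∀ p ∈ St, -(my : ℤ) ≤ p.2
  attainX : ∃ p ∈ St, p.1 = -(mx : ℤ)
  attainY : ∃ p ∈ St, p.2 = -(my : ℤ)

/-- `x`-adjacency : equal first coordinates and equal values of `S`. -/
def XAdj (St : Finset (ℤ × ℤ)) (w : ℤ × ℤ → ℂ) (a b : K × K) : Prop :=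
  a.1 = b.1 ∧ stepEval St w a.1 a.2 = stepEval St w b.1 b.2

/-- `y`-adjacency : equal second coordinates and equal values of `S`. -/
def YAdj (St : Finset (ℤ × ℤ)) (w : ℤ × ℤ → ℂ) (a b : K × K) : Prop :=
  a.2 = b.2 ∧ stepEval St w a.1 a.2 = stepEval St w b.1 b.2

/-- Adjacency. -/
def Adj (St : Finset (ℤ × ℤ)) (w : ℤ × ℤ → ℂ) (a b : K × K) : Prop :=
  XAdj St w a b ∨ YAdj St w a b

/-- The orbit of the walk: the equivalence class of `(x,y)` under the
reflexive-transitive closure of adjacency. -/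
def orbit (St : Finset (ℤ × ℤ)) (w : ℤ × ℤ → ℂ) (x y : K) : Set (K × K) :=
  {a | Relation.ReflTransGen (Adj St w) (x, y) a}

/-- `k = ℂ(S(x,y))`. -/
def kF (St : Finset (ℤ × ℤ)) (w : ℤ × ℤ → ℂ) (x y : K) : IntermediateField ℂ K :=
  adjoin ℂ {stepEval St w x y}

/-- `k(x) = ℂ(x, S(x,y))`. -/
def kxF (St : Finset (ℤ × ℤ)) (w : ℤ × ℤ → ℂ) (x y : K) : IntermediateField ℂ K :=
  adjoin ℂ {x, stepEval St w x y}

/-- `k(y) = ℂ(y, S(x,y))`. -/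
def kyF (St : Finset (ℤ × ℤ)) (w : ℤ × ℤ → ℂ) (x y : K) : IntermediateField ℂ K :=
  adjoin ℂ {y, stepEval St w x y}

/-- `k(x,y) = ℂ(x,y)`. -/
def kxyF (x y : K) : IntermediateField ℂ K := adjoin ℂ {x, y}

/-- `k(𝒪)`: the subfield generated over `k` by all coordinates of the orbit. -/
def orbitF (St : Finset (ℤ × ℤ)) (w : ℤ × ℤ → ℂ) (x y : K) : IntermediateField ℂ K :=
  adjoin ℂ ({stepEval St w x y} ∪ {z | ∃ a ∈ orbit St w x y, z = a.1 ∨ z = a.2})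

/-- The standing hypotheses: nonzero weights, a non-univariate step polynomial,
`x, y` algebraically independent over `ℂ`, and `𝕂` an algebraic closure of `ℂ(x,y)`. -/
structure Setting (St : Finset (ℤ × ℤ)) (w : ℤ × ℤ → ℂ) (x y : K) : Prop where
  weight_ne : ∀ p ∈ St, w p ≠ 0
  notUniv : NotUnivariate St
  indep : AlgebraicIndependent ℂ ![x, y]
  algClosed : IsAlgClosed K
  algebraic : Algebra.IsAlgebraic (kxyF x y) K

lemma self_mem_orbit (St : Finset (ℤ × ℤ)) (w : ℤ × ℤ → ℂ) (x y : K) :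
    (x, y) ∈ orbit St w x y := Relation.ReflTransGen.refl

lemma x_mem_orbitF (St : Finset (ℤ × ℤ)) (w : ℤ × ℤ → ℂ) (x y : K) :
    x ∈ orbitF St w x y := by
  apply subset_adjoin
  exact Set.mem_union_right _ ⟨(x, y), self_mem_orbit St w x y, Or.inl rfl⟩

lemma y_mem_orbitF (St : Finset (ℤ × ℤ)) (w : ℤ × ℤ → ℂ) (x y : K) :
    y ∈ orbitF St w x y := by
  apply subset_adjoin
  exact Set.mem_union_right _ ⟨(x, y), self_mem_orbit St w x y, Or.inr rfl⟩

lemma S_mem_orbitF (St : Finset (ℤ × ℤ)) (w : ℤ × ℤ → ℂ) (x y : K) :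
    stepEval St w x y ∈ orbitF St w x y := by
  apply subset_adjoin
  exact Set.mem_union_left _ rfl

lemma x_mem_kxF (St : Finset (ℤ × ℤ)) (w : ℤ × ℤ → ℂ) (x y : K) :
    x ∈ kxF St w x y :=
  subset_adjoin ℂ _ (Set.mem_insert _ _)

lemma S_mem_kxF (St : Finset (ℤ × ℤ)) (w : ℤ × ℤ → ℂ) (x y : K) :
    stepEval St w x y ∈ kxF St w x y :=
  subset_adjoin ℂ _ (Set.mem_insert_of_mem _ rfl)

lemma y_mem_kyF (St : Finset (ℤ × ℤ)) (w : ℤ × ℤ → ℂ) (x y : K) :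
    y ∈ kyF St w x y :=
  subset_adjoin ℂ _ (Set.mem_insert _ _)

lemma S_mem_kyF (St : Finset (ℤ × ℤ)) (w : ℤ × ℤ → ℂ) (x y : K) :
    stepEval St w x y ∈ kyF St w x y :=
  subset_adjoin ℂ _ (Set.mem_insert_of_mem _ rfl)

/-- The subgroup of `ℂ`-automorphisms of `M` fixing the subfield `E` pointwise. -/
def fixingAuts (E M : IntermediateField ℂ K) : Subgroup (↥M ≃ₐ[ℂ] ↥M) where
  carrier := {σ | ∀ (z : K) (_ : z ∈ E) (hzM : z ∈ M), σ ⟨z, hzM⟩ = ⟨z, hzM⟩}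
  one_mem' := fun _ _ _ => rfl
  mul_mem' := by
    intro σ τ hσ hτ z hzE hzM
    show σ (τ ⟨z, hzM⟩) = ⟨z, hzM⟩
    rw [hτ z hzE hzM, hσ z hzE hzM]
  inv_mem' := by
    intro σ hσ z hzE hzM
    show σ.symm ⟨z, hzM⟩ = ⟨z, hzM⟩
    conv_lhs => rw [← hσ z hzE hzM]
    exact σ.symm_apply_apply _

/-- The Galois group `G_x = Gal(k(𝒪)|k(x))`. -/
def Gx (St : Finset (ℤ × ℤ)) (w : ℤ × ℤ → ℂ) (x y : K) :
    Subgroup (↥(orbitF St w x y) ≃ₐ[ℂ] ↥(orbitF St w x y)) :=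
  fixingAuts (kxF St w x y) (orbitF St w x y)

/-- The Galois group `G_y = Gal(k(𝒪)|k(y))`. -/
def Gy (St : Finset (ℤ × ℤ)) (w : ℤ × ℤ → ℂ) (x y : K) :
    Subgroup (↥(orbitF St w x y) ≃ₐ[ℂ] ↥(orbitF St w x y)) :=
  fixingAuts (kyF St w x y) (orbitF St w x y)

/-- The Galois group `G_{xy} = Gal(k(𝒪)|k(x,y))`. -/
def Gxy (St : Finset (ℤ × ℤ)) (w : ℤ × ℤ → ℂ) (x y : K) :
    Subgroup (↥(orbitF St w x y) ≃ₐ[ℂ] ↥(orbitF St w x y)) :=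
  fixingAuts (kxyF x y) (orbitF St w x y)

/-- Extend an automorphism of an intermediate field to a map on all of `K`
(by the identity outside). -/
def extendAut {M : IntermediateField ℂ K} (σ : ↥M ≃ₐ[ℂ] ↥M) (z : K) : K :=
  if h : z ∈ M then (σ ⟨z, h⟩ : K) else z

/-- The coordinate-wise action of an automorphism on a `0`-chain. -/
def actChain {M : IntermediateField ℂ K} (σ : ↥M ≃ₐ[ℂ] ↥M)
    (γ : (K × K) →₀ ℂ) : (K × K) →₀ ℂ :=
  Finsupp.mapDomain (Prod.map (extendAut σ) (extendAut σ)) γ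

/-- Evaluation of a polynomial `P(X,Y,t)` at `(u, v, 1/S(x,y))` for `(u,v) = a`. -/
def evalPt (St : Finset (ℤ × ℤ)) (w : ℤ × ℤ → ℂ) (x y : K)
    (P : MvPolynomial (Fin 3) ℂ) (a : K × K) : K :=
  MvPolynomial.aeval ![a.1, a.2, (stepEval St w x y)⁻¹] P

/-- Evaluation of a polynomial `P(X,Y,t)` at `(x, y, 1/S(x,y))`. -/
def evalXY (St : Finset (ℤ × ℤ)) (w : ℤ × ℤ → ℂ) (x y : K)
    (P : MvPolynomial (Fin 3) ℂ) : K :=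
  evalPt St w x y P (x, y)

/-- Evaluation of the fraction `A/B` at `(a.1, a.2, 1/S(x,y))`. -/
def fracEval (St : Finset (ℤ × ℤ)) (w : ℤ × ℤ → ℂ) (x y : K)
    (A B : MvPolynomial (Fin 3) ℂ) (a : K × K) : K :=
  evalPt St w x y A a / evalPt St w x y B a

/-- Evaluation (orbit sum) of the fraction `A/B` on a `0`-chain. -/
def chainEval (St : Finset (ℤ × ℤ)) (w : ℤ × ℤ → ℂ) (x y : K)
    (A B : MvPolynomial (Fin 3) ℂ) (γ : (K × K) →₀ ℂ) : K :=
  γ.sum fun a c => algebraMap ℂ K c * fracEval St w x y A B a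

/-- A `0`-chain cancels decoupled fractions: the orbit sum of every regular fraction
of the form `F(X,t) + G(Y,t)` on it vanishes. -/
def CancelsDecoupled (St : Finset (ℤ × ℤ)) (w : ℤ × ℤ → ℂ) (mx my : ℕ)
    (x y : K) (α : (K × K) →₀ ℂ) : Prop :=
  ∀ A₁ B₁ A₂ B₂ : MvPolynomial (Fin 3) ℂ,
    A₁ ∈ MvPolynomial.supported ℂ ({0, 2} : Set (Fin 3)) →
    B₁ ∈ MvPolynomial.supported ℂ ({0, 2} : Set (Fin 3)) →
    A₂ ∈ MvPolynomial.supported ℂ ({1, 2} : Set (Fin 3)) →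
    B₂ ∈ MvPolynomial.supported ℂ ({1, 2} : Set (Fin 3)) →
    ¬ kernelPoly St w mx my ∣ B₁ → ¬ kernelPoly St w mx my ∣ B₂ →
    (α.sum fun a c =>
      algebraMap ℂ K c * (fracEval St w x y A₁ B₁ a + fracEval St w x y A₂ B₂ a)) = 0

/-- The field of fractions `ℂ(X,Y,t)`. -/
abbrev FF : Type := FractionRing (MvPolynomial (Fin 3) ℂ)

/-- The inclusion of `ℂ[X,Y,t]` into `ℂ(X,Y,t)`. -/
def toFF (P : MvPolynomial (Fin 3) ℂ) : FF := algebraMap (MvPolynomial (Fin 3) ℂ) FF P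

/-- The regular fraction `A/B` admits a Galois decoupling:
`A/B = F + G + K̃·R` with `F ∈ ℂ(X,t)`, `G ∈ ℂ(Y,t)` and `R` regular. -/
def AdmitsDecoupling (St : Finset (ℤ × ℤ)) (w : ℤ × ℤ → ℂ) (mx my : ℕ)
    (A B : MvPolynomial (Fin 3) ℂ) : Prop :=
  ∃ F₁ F₂ G₁ G₂ R₁ R₂ : MvPolynomial (Fin 3) ℂ,
    F₁ ∈ MvPolynomial.supported ℂ ({0, 2} : Set (Fin 3)) ∧
    F₂ ∈ MvPolynomial.supported ℂ ({0, 2} : Set (Fin 3)) ∧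
    G₁ ∈ MvPolynomial.supported ℂ ({1, 2} : Set (Fin 3)) ∧
    G₂ ∈ MvPolynomial.supported ℂ ({1, 2} : Set (Fin 3)) ∧
    ¬ kernelPoly St w mx my ∣ F₂ ∧ ¬ kernelPoly St w mx my ∣ G₂ ∧
    ¬ kernelPoly St w mx my ∣ R₂ ∧
    toFF A / toFF B =
      toFF F₁ / toFF F₂ + toFF G₁ / toFF G₂ +
        toFF (kernelPoly St w mx my) * (toFF R₁ / toFF R₂)

/-- `(I, J) = (A/B, Cc/D)` is a pair of Galois invariants: `I - J = K̃·R` with `R` regular. -/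
def IsInvariantPair (St : Finset (ℤ × ℤ)) (w : ℤ × ℤ → ℂ) (mx my : ℕ)
    (A B Cc D : MvPolynomial (Fin 3) ℂ) : Prop :=
  ∃ R₁ R₂ : MvPolynomial (Fin 3) ℂ, ¬ kernelPoly St w mx my ∣ R₂ ∧
    toFF A / toFF B - toFF Cc / toFF D =
      toFF (kernelPoly St w mx my) * (toFF R₁ / toFF R₂)

/-- A constant pair of Galois invariants: both members are equivalent to a
common fraction `c ∈ ℂ(t)` modulo `K̃`. -/
def IsConstantPair (St : Finset (ℤ × ℤ)) (w : ℤ × ℤ → ℂ) (mx my : ℕ)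
    (A B Cc D : MvPolynomial (Fin 3) ℂ) : Prop :=
  IsInvariantPair St w mx my A B Cc D ∧
  ∃ c₁ c₂ : MvPolynomial (Fin 3) ℂ,
    c₁ ∈ MvPolynomial.supported ℂ ({2} : Set (Fin 3)) ∧
    c₂ ∈ MvPolynomial.supported ℂ ({2} : Set (Fin 3)) ∧ c₂ ≠ 0 ∧
    IsInvariantPair St w mx my A B c₁ c₂ ∧ IsInvariantPair St w mx my Cc D c₁ c₂

/-- `(γx, γy)` is a pseudo-decoupling of `(x,y)`. -/
def PseudoDecoupling (St : Finset (ℤ × ℤ)) (w : ℤ × ℤ → ℂ) (mx my : ℕ)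
    (x y : K) (γx γy : (K × K) →₀ ℂ) : Prop :=
  ∀ A B : MvPolynomial (Fin 3) ℂ, ¬ kernelPoly St w mx my ∣ B →
    AdmitsDecoupling St w mx my A B →
      fracEval St w x y A B (x, y) =
          chainEval St w x y A B γx + chainEval St w x y A B γy ∧
        chainEval St w x y A B γx ∈ kxF St w x y ∧
        chainEval St w x y A B γy ∈ kyF St w x y

/-- `(gx, gy, a)` is a decoupling of `(x,y)` in the orbit. -/
def IsDecoupling (St : Finset (ℤ × ℤ)) (w : ℤ × ℤ → ℂ) (mx my : ℕ)
    (x y : K) (gx gy a : (K × K) →₀ ℂ) : Prop :=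
  Finsupp.single (x, y) (1 : ℂ) = gx + gy + a ∧
  (∀ σ ∈ Gx St w x y, actChain σ gx = gx) ∧
  (∀ σ ∈ Gy St w x y, actChain σ gy = gy) ∧
  CancelsDecoupled St w mx my x y a

/-- The `x`-part of the boundary of a `1`-chain. -/
def boundaryX (St : Finset (ℤ × ℤ)) (w : ℤ × ℤ → ℂ)
    (c : ((K × K) × (K × K)) →₀ ℂ) : (K × K) →₀ ℂ :=
  c.sum fun e coeff =>
    if XAdj St w e.1 e.2 then
      coeff • (Finsupp.single e.2 (1 : ℂ) - Finsupp.single e.1 (1 : ℂ)) else 0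

/-- The `y`-part of the boundary of a `1`-chain. -/
def boundaryY (St : Finset (ℤ × ℤ)) (w : ℤ × ℤ → ℂ)
    (c : ((K × K) × (K × K)) →₀ ℂ) : (K × K) →₀ ℂ :=
  c.sum fun e coeff =>
    if YAdj St w e.1 e.2 then
      coeff • (Finsupp.single e.2 (1 : ℂ) - Finsupp.single e.1 (1 : ℂ)) else 0

/-- The `0`-chain induced by a bicolored loop. -/
def IsBicoloredChain (St : Finset (ℤ × ℤ)) (w : ℤ × ℤ → ℂ) (x y : K)
    (α : (K × K) →₀ ℂ) : Prop :=
  ∃ (n : ℕ) (b : ℕ → K × K), 0 < n ∧ b (2 * n) = b 0 ∧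
    (∀ j < 2 * n, b j ∈ orbit St w x y) ∧
    (∀ i < n, XAdj St w (b (2 * i)) (b (2 * i + 1)) ∧
      YAdj St w (b (2 * i + 1)) (b (2 * i + 2))) ∧
    α = ∑ j ∈ Finset.range (2 * n), ((-1 : ℂ) ^ (j + 1)) • Finsupp.single (b j) (1 : ℂ)

/-- The `0`-chain `ω = (1/|𝒪|) ∑_{a ∈ 𝒪} a`. -/
def omegaChain (St : Finset (ℤ × ℤ)) (w : ℤ × ℤ → ℂ) (x y : K)
    (h : (orbit St w x y).Finite) : (K × K) →₀ ℂ :=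
  ((h.toFinset.card : ℂ))⁻¹ • ∑ a ∈ h.toFinset, Finsupp.single a (1 : ℂ)

/-- The average `[G]·γ = (1/|G|) ∑_{σ ∈ G} σ·γ` of a `0`-chain under a group. -/
def groupAverage {M : IntermediateField ℂ K} (G : Subgroup (↥M ≃ₐ[ℂ] ↥M))
    (γ : (K × K) →₀ ℂ) : (K × K) →₀ ℂ :=
  ((Nat.card G : ℂ))⁻¹ • ∑ᶠ σ ∈ (G : Set (↥M ≃ₐ[ℂ] ↥M)), actChain σ γ

/-- `ℂ[X,t]` (two variables: `0` and `1`). -/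
abbrev MvP2 : Type := MvPolynomial (Fin 2) ℂ

/-- `ℂ(X,t)`, the fraction field of `ℂ[X,t]`. -/
abbrev CXt : Type := FractionRing MvP2

/-- Constants `ℂ → ℂ(X,t)`. -/
def cconst : ℂ →+* CXt := (algebraMap MvP2 CXt).comp (MvPolynomial.C)

/-- The first generator of `ℂ(X,t)`. -/
def gen0 : CXt := algebraMap MvP2 CXt (MvPolynomial.X 0)

/-- The second generator of `ℂ(X,t)`. -/
def gen1 : CXt := algebraMap MvP2 CXt (MvPolynomial.X 1)

/-- The kernel polynomial viewed as a polynomial in `Y` over `ℂ(X,t)`. -/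
def kernelInY (St : Finset (ℤ × ℤ)) (w : ℤ × ℤ → ℂ) (mx my : ℕ) :
    Polynomial CXt :=
  MvPolynomial.eval₂ ((Polynomial.C : CXt →+* Polynomial CXt).comp cconst)
    ![Polynomial.C gen0, Polynomial.X, Polynomial.C gen1]
    (kernelPoly St w mx my)

/-- The kernel polynomial viewed as a polynomial in `X` over `ℂ(Y,t)`. -/
def kernelInX (St : Finset (ℤ × ℤ)) (w : ℤ × ℤ → ℂ) (mx my : ℕ) :
    Polynomial CXt :=
  MvPolynomial.eval₂ ((Polynomial.C : CXt →+* Polynomial CXt).comp cconst)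
    ![Polynomial.X, Polynomial.C gen0, Polynomial.C gen1]
    (kernelPoly St w mx my)

/-- The kernel polynomial viewed as a polynomial in `X, Y` over `ℂ(t)`. -/
def kernelInXY (St : Finset (ℤ × ℤ)) (w : ℤ × ℤ → ℂ) (mx my : ℕ) :
    MvPolynomial (Fin 2) (RatFunc ℂ) :=
  MvPolynomial.eval₂
    ((MvPolynomial.C : RatFunc ℂ →+* MvPolynomial (Fin 2) (RatFunc ℂ)).comp
      (RatFunc.C : ℂ →+* RatFunc ℂ))
    ![MvPolynomial.X 0, MvPolynomial.X 1, MvPolynomial.C RatFunc.X]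
    (kernelPoly St w mx my)

/-- The specialization `K̃(x, Y, 1/S(x,y))` as a polynomial in `Y` over `k(x)`. -/
def kernelAtX (St : Finset (ℤ × ℤ)) (w : ℤ × ℤ → ℂ) (mx my : ℕ) (x y : K) :
    Polynomial ↥(kxF St w x y) :=
  MvPolynomial.aeval
    ![Polynomial.C (⟨x, x_mem_kxF St w x y⟩ : kxF St w x y), Polynomial.X,
      Polynomial.C (⟨(stepEval St w x y)⁻¹, inv_mem (S_mem_kxF St w x y)⟩ : kxF St w x y)]
    (kernelPoly St w mx my)

/-- The specialization `K̃(X, y, 1/S(x,y))` as a polynomial in `X` over `k(y)`. -/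
def kernelAtY (St : Finset (ℤ × ℤ)) (w : ℤ × ℤ → ℂ) (mx my : ℕ) (x y : K) :
    Polynomial ↥(kyF St w x y) :=
  MvPolynomial.aeval
    ![Polynomial.X, Polynomial.C (⟨y, y_mem_kyF St w x y⟩ : kyF St w x y),
      Polynomial.C (⟨(stepEval St w x y)⁻¹, inv_mem (S_mem_kyF St w x y)⟩ : kyF St w x y)]
    (kernelPoly St w mx my)

/-- Values of regular fractions with numerator and denominator supported on a set
of variables. -/
def regRange (St : Finset (ℤ × ℤ)) (w : ℤ × ℤ → ℂ) (x y : K) (mx my : ℕ)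
    (s : Set (Fin 3)) : Set K :=
  {z | ∃ A B : MvPolynomial (Fin 3) ℂ,
    A ∈ MvPolynomial.supported ℂ s ∧ B ∈ MvPolynomial.supported ℂ s ∧
    ¬ kernelPoly St w mx my ∣ B ∧ z = evalXY St w x y A / evalXY St w x y B}

end QuadrantWalk
namespace QuadrantWalk

/-!
All three conditions are equivalent to `𝕂` being algebraic over `k_inv = k(x) ∩ k(y)`.

Let `G` be the group of automorphisms of `𝕂` generated by the absolute Galois groups of `k(x)` and
`k(y)`; its fixed field is `k_inv`. If `S(x, v) = S(x, y)`, then `x, v` is again a transcendence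
basis of `𝕂`, so some automorphism of `𝕂` over `k(x)` sends `y` to `v`. Hence the orbit of the walk
is the orbit of `(x, y)` under `G`, and it is finite exactly when `x` and `y` are algebraic over
the fixed field of `G`.

If `𝕂` is algebraic over `k_inv`, then `M` can be any finite Galois extension of `k_inv` containing
`x` and `y`. Conversely, `M` is algebraic over the fixed field of a finite group of automorphisms.

An element of `k(x)` outside `k` is a nonconstant rational function of `x` over `k`, so `x` is
algebraic over any extension of `k` containing it. On the other hand `𝕂` is not algebraic over `k`,
whose transcendence degree over `ℂ` is at most one.
-/

section FiniteOrbits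

open MulAction Polynomial

variable {A B G : Type*} [CommRing A] [CommRing B] [Algebra A B] [Group G] [MulSemiringAction G B]

theorem isIntegral_of_finite_orbit [Algebra.IsInvariant A B G] {b : B}
    (hb : (MulAction.orbit G b).Finite) : IsIntegral A b := by
  nontriviality B
  let P : B[X] := ∏ u ∈ hb.toFinset, (X - C u)
  have smul_P (g : G) : g • P = P := by
    simp only [P, Finset.smul_prod', smul_sub, smul_X, smul_C]
    refine Finset.prod_bijective (g • ·) (MulAction.bijective g) (fun u ↦ ?_) fun _ _ ↦ rfl
    simp only [Set.Finite.mem_toFinset, ← orbit_eq_iff, orbit_smul]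
  have hlift : P ∈ lifts (algebraMap A B) := (lifts_iff_coeff_lifts P).2 fun n ↦
    Algebra.IsInvariant.isInvariant (G := G) _ fun g ↦ by rw [← coeff_smul, smul_P]
  obtain ⟨Q, hQP, -, hQ⟩ :=
    lifts_and_natDegree_eq_and_monic hlift (monic_prod_X_sub_C _ _)
  refine ⟨Q, hQ, ?_⟩
  rw [← eval_map, hQP, eval_prod]
  exact Finset.prod_eq_zero (hb.mem_toFinset.2 (mem_orbit_self b)) (by simp)

theorem finite_orbit_of_isIntegral [IsDomain B] [SMulCommClass G A B] {b : B}
    (hb : IsIntegral A b) : (MulAction.orbit G b).Finite := by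
  obtain ⟨P, hP, hPb⟩ := hb
  refine (finite_setOfPred_isRoot (hP.map (algebraMap A B)).ne_zero).subset ?_
  rintro _ ⟨g, rfl⟩
  have hg : aeval (g • b) P = g • aeval b P :=
    aeval_algHom_apply (MulSemiringAction.toAlgHom A B g) b P
  change ((P.map _).eval (g • b)) = 0
  rw [eval_map_algebraMap, hg, aeval_def, hPb, smul_zero]

theorem finite_orbit_iff_isIntegral [IsDomain B] [Algebra.IsInvariant A B G]
    [SMulCommClass G A B] {b : B} : (MulAction.orbit G b).Finite ↔ IsIntegral A b :=
  ⟨isIntegral_of_finite_orbit, finite_orbit_of_isIntegral⟩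

theorem finite_orbit_prodMk {M α β : Type*} [Monoid M] [MulAction M α] [MulAction M β]
    {a : α} {b : β} : (MulAction.orbit M (a, b)).Finite ↔
      (MulAction.orbit M a).Finite ∧ (MulAction.orbit M b).Finite := by
  refine ⟨fun h ↦ ⟨(h.image Prod.fst).subset ?_, (h.image Prod.snd).subset ?_⟩,
    fun h ↦ (h.1.prod h.2).subset ?_⟩
  all_goals rintro _ ⟨g, rfl⟩
  exacts [⟨_, ⟨g, rfl⟩, rfl⟩, ⟨_, ⟨g, rfl⟩, rfl⟩, ⟨⟨g, rfl⟩, ⟨g, rfl⟩⟩]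

end FiniteOrbits

section Laurent

variable {F L : Type*} [Field F] [Field L] [Algebra F L] {y : L}

theorem linearIndependent_pow_of_transcendental (hy : Transcendental F y) :
    LinearIndependent F (fun n : ℕ ↦ y ^ n) := by
  simpa [Function.comp_def] using (Polynomial.basisMonomials F).linearIndependent.map'
    (Polynomial.aeval y).toLinearMap (LinearMap.ker_eq_bot.2 (transcendental_iff_injective.1 hy))

theorem linearIndependent_zpow_of_transcendental (hy : Transcendental F y) :
    LinearIndependent F (fun n : ℤ ↦ y ^ n) := by
  have hy0 : y ≠ 0 := fun h ↦ hy (h ▸ isAlgebraic_zero)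
  rw [linearIndependent_iff_finset_linearIndependent]
  intro s
  obtain ⟨N, hN⟩ : ∃ N : ℤ, ∀ n ∈ s, N ≤ n := s.bddBelow
  have hinj : Function.Injective fun n : s ↦ ((n : ℤ) - N).toNat := by
    intro m n hmn
    have hm := hN m m.2
    have hn := hN n n.2
    grind
  have hshift : (fun n : ℤ ↦ y ^ n) ∘ ((↑) : s → ℤ) =
      LinearMap.mulRight F (y ^ N) ∘ (fun n : ℕ ↦ y ^ n) ∘ fun n : s ↦ ((n : ℤ) - N).toNat := by
    funext n
    simp only [Function.comp_apply, LinearMap.mulRight_apply]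
    rw [← zpow_natCast, Int.toNat_of_nonneg (sub_nonneg.2 (hN n n.2)), ← zpow_add₀ hy0,
      sub_add_cancel]
  exact hshift ▸ ((linearIndependent_pow_of_transcendental hy).comp _ hinj).map' _
    (LinearMap.ker_eq_bot.2 (mul_left_injective₀ (zpow_ne_zero N hy0)))

theorem sum_fiber_eq_of_sum_smul_zpow_eq {ι : Type*} (hy : Transcendental F y) {s : Finset ι}
    {c : ι → F} {n : ι → ℤ} {a : F} (h : ∑ p ∈ s, c p • y ^ n p = algebraMap F L a) (j : ℤ) :
    ∑ p ∈ s with n p = j, c p = if j = 0 then a else 0 := by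
  have key : ∑ p ∈ s, Finsupp.single (n p) (c p) = Finsupp.single 0 a :=
    linearIndependent_zpow_of_transcendental hy <| by
      simp [Finsupp.linearCombination_single, h, Algebra.algebraMap_eq_smul_one]
  simpa [Finsupp.single_apply, Finset.sum_filter, eq_comm (a := j)] using DFunLike.congr_fun key j

end Laurent

section FieldExtensions

variable {F L : Type*} [Field F] [Field L] [Algebra F L]

theorem isAlgebraic_of_mem_adjoin_simple {E : IntermediateField F L} {x z : L} (hzE : z ∈ E)
    (hzx : z ∈ F⟮x⟯) (hz : z ∉ (⊥ : IntermediateField F L)) : IsAlgebraic E x := by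
  by_cases hx : IsAlgebraic F x
  · exact hx.tower_top _
  let e : RatFunc F ≃ₐ[F] F⟮x⟯ := RatFunc.algEquivOfTranscendental x hx
  let φ : RatFunc F →ₐ[F] L := F⟮x⟯.val.comp e
  obtain ⟨f, hf⟩ := e.surjective ⟨z, hzx⟩
  have hφf : φ f = z := congrArg Subtype.val hf
  have hE : E.comap φ ≠ ⊥ := by
    intro hbot
    have hfE : f ∈ E.comap φ := show φ f ∈ E from hφf ▸ hzE
    obtain ⟨c, rfl⟩ := IntermediateField.mem_bot.1 (hbot ▸ hfE)
    exact hz (IntermediateField.mem_bot.2 ⟨c, (φ.commutes c).symm.trans hφf⟩)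
  let i : E.comap φ →+* E := (φ : RatFunc F →+* L).restrict (E.comap φ) E fun _ h ↦ h
  have hφX : φ RatFunc.X = x := RatFunc.algEquivOfTranscendental_X x hx
  exact hφX ▸ (RatFunc.IntermediateField.isAlgebraic_X hE).ringHom_of_comp_eq i φ i.injective rfl

theorem exists_algEquiv_of_isTranscendenceBasis {ι : Type*} [IsAlgClosed L] {v w : ι → L}
    (hv : IsTranscendenceBasis F v) (hw : IsTranscendenceBasis F w) :
    ∃ σ : L ≃ₐ[F] L, ∀ i, σ (v i) = w i := by
  have := IsAlgClosed.isAlgClosure_of_transcendence_basis v hv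
  have := IsAlgClosed.isAlgClosure_of_transcendence_basis w hw
  let e := hv.1.aevalEquiv.symm.trans hw.1.aevalEquiv
  let σ : L ≃+* L := IsAlgClosure.equivOfEquiv L L e.toRingEquiv
  have hσ (z) : σ (algebraMap _ L z) = algebraMap _ L (e z) :=
    IsAlgClosure.equivOfEquiv_algebraMap L L e.toRingEquiv z
  refine ⟨AlgEquiv.ofRingEquiv (f := σ) fun c ↦ ?_, fun i ↦ ?_⟩
  · simpa using hσ (algebraMap F _ c)
  · simpa [e] using hσ (hv.1.aevalEquiv (MvPolynomial.X i))

theorem mem_of_forall_fixingSubgroup {E : IntermediateField F L} [IsGalois E L] {t : L}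
    (ht : ∀ σ ∈ E.fixingSubgroup, σ t = t) : t ∈ E := by
  obtain ⟨e, rfl⟩ := (InfiniteGalois.mem_range_algebraMap_iff_fixed (k := E) t).2 fun f ↦
    ht _ ((fixingSubgroupEquiv E).symm f).2
  exact e.2

theorem mem_fixingSubgroup_adjoin {s : Set L} {σ : L ≃ₐ[F] L} (h : ∀ z ∈ s, σ z = z) :
    σ ∈ (adjoin F s).fixingSubgroup := by
  have hσ : (σ : L →ₐ[F] L).comp (adjoin F s).val = (adjoin F s).val := adjoin_algHom_ext F h
  exact fun z ↦ DFunLike.congr_fun hσ z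

theorem isAlgebraic_of_le_algebraicClosure {E B : IntermediateField F L}
    (hB : B ≤ (algebraicClosure E L).restrictScalars F) {z : L} (hz : IsAlgebraic B z) :
    IsAlgebraic E z := by
  have hz' : IsAlgebraic (algebraicClosure E L) z :=
    hz.tower_top_of_subalgebra_le (B := ((algebraicClosure E L).restrictScalars F).toSubalgebra) hB
  exact hz'.restrictScalars E

theorem exists_isGalois_finiteDimensional_extendScalars (E : IntermediateField F L) [IsGalois E L]
    (s : Set L) [Finite s] : ∃ (M : IntermediateField F L) (h : E ≤ M), s ⊆ M ∧
      IsGalois E (extendScalars h) ∧ FiniteDimensional E (extendScalars h) := by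
  let M := FiniteGaloisIntermediateField.adjoin E s
  have hE : E ≤ M.restrictScalars F := fun e he ↦ M.algebraMap_mem ⟨e, he⟩
  exact ⟨M.restrictScalars F, hE, FiniteGaloisIntermediateField.subset_adjoin E s,
    M.isGalois, M.finiteDimensional⟩

variable {E E' M : IntermediateField F L}

theorem isGalois_extendScalars_of_le (hE : E ≤ E') (h' : E' ≤ M)
    [IsGalois E (extendScalars (hE.trans h'))] : IsGalois E' (extendScalars h') := by
  let : Algebra E E' := (inclusion hE).toAlgebra
  let : Algebra E' (extendScalars (hE.trans h')) := (inclusion h').toAlgebra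
  have : IsScalarTower E E' (extendScalars (hE.trans h')) := .of_algebraMap_eq fun _ ↦ rfl
  exact IsGalois.tower_top_of_isGalois E E' (extendScalars (hE.trans h'))

theorem finiteDimensional_extendScalars_of_le (hE : E ≤ E') (h' : E' ≤ M)
    [FiniteDimensional E (extendScalars (hE.trans h'))] :
    FiniteDimensional E' (extendScalars h') := by
  let : Algebra E E' := (inclusion hE).toAlgebra
  let : Algebra E' (extendScalars (hE.trans h')) := (inclusion h').toAlgebra
  have : IsScalarTower E E' (extendScalars (hE.trans h')) := .of_algebraMap_eq fun _ ↦ rfl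
  exact FiniteDimensional.right E E' (extendScalars (hE.trans h'))

end FieldExtensions

section FixingAuts

variable {K : Type} [Field K] [Algebra ℂ K] {E E' M : IntermediateField ℂ K}

theorem fixingAuts_anti (h : E ≤ E') : fixingAuts E' M ≤ fixingAuts E M :=
  fun _ hσ z hz ↦ hσ z (h hz)

theorem finite_fixingAuts (h : E ≤ M) [FiniteDimensional E (extendScalars h)] :
    (fixingAuts E M : Set (M ≃ₐ[ℂ] M)).Finite := by
  refine (Set.finite_range fun σ : Gal(extendScalars h/E) ↦ σ.restrictScalars ℂ).subset ?_
  rintro (σ : M ≃ₐ[ℂ] M) hσ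
  exact ⟨{ σ with commutes' := fun e ↦ hσ e e.2 (h e.2) }, rfl⟩

theorem mem_of_forall_fixingAuts (h : E ≤ M) [IsGalois E (extendScalars h)] {z : M}
    (hz : ∀ σ ∈ fixingAuts E M, σ z = z) : (z : K) ∈ E := by
  obtain ⟨e, rfl⟩ := (InfiniteGalois.mem_range_algebraMap_iff_fixed (k := E)
    (K := extendScalars h) z).2 fun f ↦ hz (f.restrictScalars ℂ) fun t ht _ ↦ f.commutes ⟨t, ht⟩
  exact e.2

theorem isAlgebraic_inf_of_finite_sup_fixingAuts (h : E ≤ M) (h' : E' ≤ M)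
    [IsGalois E (extendScalars h)] [IsGalois E' (extendScalars h')]
    (hfin : ((fixingAuts E M ⊔ fixingAuts E' M : Subgroup (M ≃ₐ[ℂ] M)) :
      Set (M ≃ₐ[ℂ] M)).Finite)
    {z : K} (hz : z ∈ M) : IsAlgebraic ↥(E ⊓ E') z := by
  let G : Subgroup (M ≃ₐ[ℂ] M) := fixingAuts E M ⊔ fixingAuts E' M
  have : Finite G := hfin
  let : Algebra ↥(E ⊓ E') M := (inclusion (inf_le_left.trans h)).toAlgebra
  have : IsScalarTower ↥(E ⊓ E') M K := .of_algebraMap_eq fun _ ↦ rfl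
  have : Algebra.IsInvariant ↥(E ⊓ E') M G := ⟨fun t ht ↦
    ⟨⟨t, mem_of_forall_fixingAuts h fun σ hσ ↦ ht ⟨σ, Subgroup.mem_sup_left hσ⟩,
      mem_of_forall_fixingAuts h' fun σ hσ ↦ ht ⟨σ, Subgroup.mem_sup_right hσ⟩⟩, rfl⟩⟩
  have : Algebra.IsIntegral ↥(E ⊓ E') M := Algebra.IsInvariant.isIntegral _ _ G
  exact (this.isIntegral ⟨z, hz⟩).isAlgebraic.algebraMap

end FixingAuts

section Walk

variable {K : Type} [Field K] [Algebra ℂ K] {St : Finset (ℤ × ℤ)} {w : ℤ × ℤ → ℂ} {x y : K}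

theorem stepEval_mem {E : IntermediateField ℂ K} {u v : K} (hu : u ∈ E) (hv : v ∈ E) :
    stepEval St w u v ∈ E :=
  sum_mem fun _ _ ↦ mul_mem (mul_mem (E.algebraMap_mem _) (zpow_mem hu _)) (zpow_mem hv _)

theorem smul_stepEval (g : K ≃ₐ[ℂ] K) (u v : K) :
    g • stepEval St w u v = stepEval St w (g • u) (g • v) := by
  simp only [stepEval, AlgEquiv.smul_def, map_sum, map_mul, map_zpow₀, AlgEquiv.commutes]

theorem restrictScalars_adjoin_kF (St : Finset (ℤ × ℤ)) (w : ℤ × ℤ → ℂ) (x y : K) :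
    (adjoin (kF St w x y) {x}).restrictScalars ℂ = kxF St w x y := by
  rw [kF, kxF, adjoin_adjoin_left, Set.singleton_union, Set.pair_comm]

/-- The step set with the two coordinates exchanged. With the weights `w ∘ Prod.swap` it encodes
`S(Y, X)`, which turns statements about `k(x)` into statements about `k(y)`. -/
def swapSteps (St : Finset (ℤ × ℤ)) : Finset (ℤ × ℤ) :=
  St.map (Equiv.prodComm ℤ ℤ).toEmbedding

theorem stepEval_swap (St : Finset (ℤ × ℤ)) (w : ℤ × ℤ → ℂ) (u v : K) :
    stepEval (swapSteps St) (w ∘ Prod.swap) v u = stepEval St w u v := by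
  simp [stepEval, swapSteps, mul_right_comm]

theorem kxF_swap (St : Finset (ℤ × ℤ)) (w : ℤ × ℤ → ℂ) (x y : K) :
    kxF (swapSteps St) (w ∘ Prod.swap) y x = kyF St w x y := by
  rw [kxF, kyF, stepEval_swap]

/-- The field of Galois invariants `k_inv = k(x) ∩ k(y)`, over which `𝕂` is algebraic exactly when
the orbit is finite. -/
abbrev kinvF (St : Finset (ℤ × ℤ)) (w : ℤ × ℤ → ℂ) (x y : K) : IntermediateField ℂ K :=
  kxF St w x y ⊓ kyF St w x y

theorem kF_le_kinvF (St : Finset (ℤ × ℤ)) (w : ℤ × ℤ → ℂ) (x y : K) :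
    kF St w x y ≤ kinvF St w x y :=
  adjoin_simple_le_iff.2 ⟨S_mem_kxF St w x y, S_mem_kyF St w x y⟩

namespace Setting

theorem swap (h : Setting St w x y) : Setting (swapSteps St) (w ∘ Prod.swap) y x where
  weight_ne := by
    intro p hp
    obtain ⟨q, hq, rfl⟩ := Finset.mem_map.1 hp
    exact h.weight_ne q hq
  notUniv := by
    have hswap (r) (hr : r ∈ St) : r.swap ∈ swapSteps St := Finset.mem_map.2 ⟨r, hr, rfl⟩
    obtain ⟨⟨p, hp, q, hq, hpq⟩, ⟨p', hp', q', hq', hpq'⟩⟩ := h.notUniv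
    exact ⟨⟨_, hswap p' hp', _, hswap q' hq', hpq'⟩, ⟨_, hswap p hp, _, hswap q hq, hpq⟩⟩
  indep := by
    convert h.indep.comp ![1, 0] (by decide) using 1
    funext i
    fin_cases i <;> rfl
  algClosed := h.algClosed
  algebraic := by
    rw [kxyF, Set.pair_comm]
    exact h.algebraic

-- If `v` were transcendental over `E`, comparing coefficients of `v ^ j` with `j ≠ 0` would give a
-- nontrivial Laurent relation for `x` over `ℂ`.
theorem isAlgebraic_of_stepEval_mem (h : Setting St w x y) {E : IntermediateField ℂ K} {v : K}
    (hx : x ∈ E) (hS : stepEval St w x v ∈ E) : IsAlgebraic E v := by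
  by_contra hv
  obtain ⟨q, hq, hq2⟩ : ∃ q ∈ St, q.2 ≠ 0 := by
    obtain ⟨-, p, hp, q, hq, hpq⟩ := h.notUniv
    grind
  have hS_sum : ∑ p ∈ St, (algebraMap ℂ E (w p) * (⟨x, hx⟩ : E) ^ p.1) • v ^ p.2 =
      algebraMap E K ⟨stepEval St w x v, hS⟩ := by
    refine Finset.sum_congr rfl fun p _ ↦ ?_
    rw [Algebra.smul_def, map_mul, map_zpow₀]
    rfl
  have hcoeff : ∑ p ∈ St with p.2 = q.2, w p • x ^ p.1 = algebraMap ℂ K 0 := by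
    have hE := congrArg (algebraMap E K) (sum_fiber_eq_of_sum_smul_zpow_eq hv hS_sum q.2)
    simp only [map_sum, map_mul, map_zpow₀, if_neg hq2, map_zero] at hE
    simp only [Algebra.smul_def, map_zero]
    exact hE
  have hwq := sum_fiber_eq_of_sum_smul_zpow_eq (h.indep.transcendental 0) hcoeff q.1
  have hfiber : {p ∈ {p ∈ St | p.2 = q.2} | p.1 = q.1} = {q} := by
    grind
  rw [hfiber, Finset.sum_singleton, ite_self] at hwq
  exact h.weight_ne q hq hwq

theorem algebra_isAlgebraic_of_isAlgebraic (h : Setting St w x y) {E : IntermediateField ℂ K}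
    (hS : stepEval St w x y ∈ E) (hx : IsAlgebraic E x) : Algebra.IsAlgebraic E K := by
  let A : IntermediateField ℂ K := (algebraicClosure E K).restrictScalars ℂ
  have hxA : x ∈ A := mem_algebraicClosure_iff.2 hx
  have hSA : stepEval St w x y ∈ A :=
    mem_algebraicClosure_iff.2 (isAlgebraic_algebraMap (⟨_, hS⟩ : E))
  have hyA : y ∈ A := mem_algebraicClosure_iff.2 <|
    isAlgebraic_of_le_algebraicClosure le_rfl (h.isAlgebraic_of_stepEval_mem hxA hSA)
  have hA : kxyF x y ≤ A := adjoin_le_iff.2 (Set.pair_subset hxA hyA)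
  exact ⟨fun z ↦ isAlgebraic_of_le_algebraicClosure hA (h.algebraic.isAlgebraic z)⟩

theorem algebra_isAlgebraic_of_mem (h : Setting St w x y) {E : IntermediateField ℂ K}
    (hS : stepEval St w x y ∈ E) (hx : x ∈ E) : Algebra.IsAlgebraic E K :=
  h.algebra_isAlgebraic_of_isAlgebraic hS (isAlgebraic_algebraMap (⟨x, hx⟩ : E))

theorem isGalois_of_isAlgebraic (h : Setting St w x y) (E : IntermediateField ℂ K)
    [Algebra.IsAlgebraic E K] : IsGalois E K := by
  have : IsAlgClosure E K := ⟨h.algClosed, inferInstance⟩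
  exact IsAlgClosure.isGalois E K

theorem isGalois_kxF (h : Setting St w x y) : IsGalois (kxF St w x y) K := by
  have := h.algebra_isAlgebraic_of_mem (S_mem_kxF St w x y) (x_mem_kxF St w x y)
  exact h.isGalois_of_isAlgebraic _

theorem isGalois_kyF (h : Setting St w x y) : IsGalois (kyF St w x y) K :=
  kxF_swap St w x y ▸ h.swap.isGalois_kxF

theorem two_le_trdeg (h : Setting St w x y) : 2 ≤ Algebra.trdeg ℂ K := by
  simpa using h.indep.cardinalMk_le_trdeg

theorem not_algebra_isAlgebraic_kF (h : Setting St w x y) :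
    ¬ Algebra.IsAlgebraic (kF St w x y) K := by
  intro hk
  have : Algebra.IsAlgebraic (Algebra.adjoin ℂ {stepEval St w x y}) K :=
    isAlgebraic_adjoin_iff_top.1 hk
  have htrdeg := Algebra.IsAlgebraic.trdeg_le_cardinalMk ℂ (A := K) {stepEval St w x y}
  simpa using h.two_le_trdeg.trans htrdeg

theorem isTranscendenceBasis_of_stepEval_eq (h : Setting St w x y) {v : K}
    (hv : stepEval St w x v = stepEval St w x y) : IsTranscendenceBasis ℂ ![x, v] := by
  have hx : x ∈ adjoin ℂ (Set.range ![x, v]) := subset_adjoin ℂ _ ⟨0, rfl⟩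
  have hS : stepEval St w x y ∈ adjoin ℂ (Set.range ![x, v]) :=
    hv ▸ stepEval_mem hx (subset_adjoin ℂ _ ⟨1, rfl⟩)
  have := isAlgebraic_adjoin_iff_top.1 (h.algebra_isAlgebraic_of_mem hS hx)
  exact Algebra.IsAlgebraic.isTranscendenceBasis_of_le_trdeg_of_finite ℂ _
    (by simpa using h.two_le_trdeg)

theorem exists_mem_fixingSubgroup_kxF (h : Setting St w x y) {v : K}
    (hv : stepEval St w x v = stepEval St w x y) :
    ∃ σ ∈ (kxF St w x y).fixingSubgroup, σ y = v := by
  have := h.algClosed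
  obtain ⟨σ, hσ⟩ := exists_algEquiv_of_isTranscendenceBasis
    (h.isTranscendenceBasis_of_stepEval_eq rfl) (h.isTranscendenceBasis_of_stepEval_eq hv)
  have hσx : σ x = x := hσ 0
  have hσy : σ y = v := hσ 1
  refine ⟨σ, mem_fixingSubgroup_adjoin ?_, hσy⟩
  rintro z (rfl | rfl)
  · exact hσx
  · exact (smul_stepEval σ x y).trans (by simp only [AlgEquiv.smul_def, hσx, hσy, hv])

theorem exists_mem_fixingSubgroup_kyF (h : Setting St w x y) {u : K}
    (hu : stepEval St w u y = stepEval St w x y) :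
    ∃ σ ∈ (kyF St w x y).fixingSubgroup, σ x = u := by
  rw [← kxF_swap]
  exact h.swap.exists_mem_fixingSubgroup_kxF (by rw [stepEval_swap, stepEval_swap, hu])

end Setting

theorem Adj.symm {a b : K × K} (h : Adj St w a b) : Adj St w b a :=
  h.imp (fun h ↦ ⟨h.1.symm, h.2.symm⟩) fun h ↦ ⟨h.1.symm, h.2.symm⟩

theorem Adj.smul {a b : K × K} (h : Adj St w a b) (g : K ≃ₐ[ℂ] K) :
    Adj St w (g • a) (g • b) := by
  have hS (hab : stepEval St w a.1 a.2 = stepEval St w b.1 b.2) :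
      stepEval St w (g • a).1 (g • a).2 = stepEval St w (g • b).1 (g • b).2 :=
    (smul_stepEval g a.1 a.2).symm.trans ((congrArg (g • ·) hab).trans (smul_stepEval g b.1 b.2))
  exact h.imp (fun h ↦ ⟨congrArg (g • ·) h.1, hS h.2⟩) fun h ↦ ⟨congrArg (g • ·) h.1, hS h.2⟩

theorem reflTransGen_adj_symm {a b : K × K} (h : Relation.ReflTransGen (Adj St w) a b) :
    Relation.ReflTransGen (Adj St w) b a :=
  Relation.ReflTransGen.mono (fun _ _ ↦ Adj.symm) _ _ h.swap

theorem reflTransGen_adj_smul {a b : K × K} (h : Relation.ReflTransGen (Adj St w) a b)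
    (g : K ≃ₐ[ℂ] K) : Relation.ReflTransGen (Adj St w) (g • a) (g • b) :=
  h.lift (g • ·) fun _ _ hab ↦ hab.smul g

/-- The group of automorphisms of `𝕂` generated by the absolute Galois groups of `k(x)` and
`k(y)`. It realizes the orbit of the walk as the orbit of `(x, y)` under a group. -/
def walkGroup (St : Finset (ℤ × ℤ)) (w : ℤ × ℤ → ℂ) (x y : K) : Subgroup (K ≃ₐ[ℂ] K) :=
  (kxF St w x y).fixingSubgroup ⊔ (kyF St w x y).fixingSubgroup

theorem walkGroup_le_fixingSubgroup_kinvF :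
    walkGroup St w x y ≤ (kinvF St w x y).fixingSubgroup :=
  sup_le (fixingSubgroup_antitone inf_le_left) (fixingSubgroup_antitone inf_le_right)

instance : SMulCommClass (walkGroup St w x y) (kinvF St w x y) K where
  smul_comm g c z := by
    have hg : g.1 c = c := walkGroup_le_fixingSubgroup_kinvF g.2 c
    change g.1 (c * z) = c * g.1 z
    rw [map_mul, hg]

theorem smul_mem_orbit {g : K ≃ₐ[ℂ] K} (hg : g ∈ walkGroup St w x y) :
    g • (x, y) ∈ orbit St w x y := by
  rw [walkGroup, Subgroup.sup_eq_closure] at hg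
  induction hg using Subgroup.closure_induction with
  | mem σ hσ =>
    refine .single (hσ.imp (fun hσ ↦ ?_) fun hσ ↦ ?_)
    · exact ⟨(hσ ⟨x, x_mem_kxF St w x y⟩).symm,
        (hσ ⟨_, S_mem_kxF St w x y⟩).symm.trans (smul_stepEval σ x y)⟩
    · exact ⟨(hσ ⟨y, y_mem_kyF St w x y⟩).symm,
        (hσ ⟨_, S_mem_kyF St w x y⟩).symm.trans (smul_stepEval σ x y)⟩
  | one => exact (one_smul (K ≃ₐ[ℂ] K) (x, y)).symm ▸ self_mem_orbit St w x y
  | mul g g' _ _ hg hg' => exact mul_smul g g' (x, y) ▸ hg.trans (reflTransGen_adj_smul hg' g)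
  | inv g _ hg =>
    have hg' := reflTransGen_adj_smul hg g⁻¹
    rw [inv_smul_smul] at hg'
    exact reflTransGen_adj_symm hg'

namespace Setting

theorem exists_mem_walkGroup_smul_eq_of_adj (h : Setting St w x y) {b : K × K}
    (hb : Adj St w (x, y) b) : ∃ σ ∈ walkGroup St w x y, σ • (x, y) = b := by
  obtain ⟨u, v⟩ := b
  rcases hb with ⟨rfl : x = u, hS⟩ | ⟨rfl : y = v, hS⟩
  · obtain ⟨σ, hσ, rfl⟩ := h.exists_mem_fixingSubgroup_kxF hS.symm
    exact ⟨σ, Subgroup.mem_sup_left hσ, Prod.ext (hσ ⟨x, x_mem_kxF St w x y⟩) rfl⟩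
  · obtain ⟨σ, hσ, rfl⟩ := h.exists_mem_fixingSubgroup_kyF hS.symm
    exact ⟨σ, Subgroup.mem_sup_right hσ, Prod.ext rfl (hσ ⟨y, y_mem_kyF St w x y⟩)⟩

theorem orbit_eq_mulAction_orbit (h : Setting St w x y) :
    orbit St w x y = MulAction.orbit (walkGroup St w x y) (x, y) := by
  refine Set.Subset.antisymm (fun a ha ↦ ?_) fun _ ⟨g, hg⟩ ↦ hg ▸ smul_mem_orbit g.2
  induction (ha : Relation.ReflTransGen (Adj St w) (x, y) a) with
  | refl => exact MulAction.mem_orbit_self _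
  | @tail _ b _ hb ih =>
    obtain ⟨g, rfl⟩ := ih
    have hgb : Adj St w (x, y) (g.1⁻¹ • b) :=
      inv_smul_smul g.1 (x, y) ▸ hb.smul g.1⁻¹
    obtain ⟨σ, hσ, hσb⟩ := h.exists_mem_walkGroup_smul_eq_of_adj hgb
    exact ⟨g * ⟨σ, hσ⟩, (mul_smul g.1 σ _).trans (hσb ▸ smul_inv_smul g.1 b)⟩

theorem isInvariant_kinvF (h : Setting St w x y) :
    Algebra.IsInvariant (kinvF St w x y) K (walkGroup St w x y) := by
  have := h.isGalois_kxF
  have := h.isGalois_kyF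
  exact ⟨fun z hz ↦ ⟨⟨z,
    mem_of_forall_fixingSubgroup fun σ hσ ↦ hz ⟨σ, Subgroup.mem_sup_left hσ⟩,
    mem_of_forall_fixingSubgroup fun σ hσ ↦ hz ⟨σ, Subgroup.mem_sup_right hσ⟩⟩, rfl⟩⟩

theorem isAlgebraic_kinvF_iff (h : Setting St w x y) :
    Algebra.IsAlgebraic (kinvF St w x y) K ↔ IsAlgebraic (kinvF St w x y) x :=
  ⟨fun _ ↦ Algebra.IsAlgebraic.isAlgebraic x,
    h.algebra_isAlgebraic_of_isAlgebraic ⟨S_mem_kxF St w x y, S_mem_kyF St w x y⟩⟩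

theorem finite_orbit_iff_isAlgebraic_kinvF (h : Setting St w x y) :
    (orbit St w x y).Finite ↔ Algebra.IsAlgebraic (kinvF St w x y) K := by
  have := h.isInvariant_kinvF
  rw [h.orbit_eq_mulAction_orbit, finite_orbit_prodMk,
    finite_orbit_iff_isIntegral (A := kinvF St w x y), ← isAlgebraic_iff_isIntegral,
    finite_orbit_iff_isIntegral (A := kinvF St w x y), ← isAlgebraic_iff_isIntegral]
  exact ⟨fun hxy ↦ h.isAlgebraic_kinvF_iff.2 hxy.1, fun _ ↦
    ⟨Algebra.IsAlgebraic.isAlgebraic x, Algebra.IsAlgebraic.isAlgebraic y⟩⟩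

theorem exists_finite_sup_fixingAuts (h : Setting St w x y)
    [Algebra.IsAlgebraic (kinvF St w x y) K] :
    ∃ (M : IntermediateField ℂ K) (h1 : kxF St w x y ≤ M) (h2 : kyF St w x y ≤ M),
      IsGalois (kxF St w x y) (extendScalars h1) ∧
      FiniteDimensional (kxF St w x y) (extendScalars h1) ∧
      IsGalois (kyF St w x y) (extendScalars h2) ∧
      FiniteDimensional (kyF St w x y) (extendScalars h2) ∧
      ((fixingAuts (kxF St w x y) M ⊔ fixingAuts (kyF St w x y) M :
        Subgroup (M ≃ₐ[ℂ] M)) : Set (M ≃ₐ[ℂ] M)).Finite := by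
  have := h.isGalois_of_isAlgebraic (kinvF St w x y)
  obtain ⟨M, hM, hxy, hgal, hfin⟩ :=
    exists_isGalois_finiteDimensional_extendScalars (kinvF St w x y) {x, y}
  obtain ⟨hx, hy⟩ := Set.pair_subset_iff.1 hxy
  have hS : stepEval St w x y ∈ M := stepEval_mem hx hy
  have h1 : kxF St w x y ≤ M := adjoin_le_iff.2 (Set.pair_subset hx hS)
  have h2 : kyF St w x y ≤ M := adjoin_le_iff.2 (Set.pair_subset hy hS)
  have hkx : kinvF St w x y ≤ kxF St w x y := inf_le_left
  have hky : kinvF St w x y ≤ kyF St w x y := inf_le_right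
  exact ⟨M, h1, h2,
    isGalois_extendScalars_of_le hkx h1, finiteDimensional_extendScalars_of_le hkx h1,
    isGalois_extendScalars_of_le hky h2, finiteDimensional_extendScalars_of_le hky h2,
    (finite_fixingAuts hM).subset (sup_le (fixingAuts_anti hkx) (fixingAuts_anti hky))⟩

theorem isAlgebraic_kinvF_of_finite_sup_fixingAuts (h : Setting St w x y)
    {M : IntermediateField ℂ K} (h1 : kxF St w x y ≤ M) (h2 : kyF St w x y ≤ M)
    [IsGalois (kxF St w x y) (extendScalars h1)] [IsGalois (kyF St w x y) (extendScalars h2)]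
    (hfin : ((fixingAuts (kxF St w x y) M ⊔ fixingAuts (kyF St w x y) M :
      Subgroup (M ≃ₐ[ℂ] M)) : Set (M ≃ₐ[ℂ] M)).Finite) :
    Algebra.IsAlgebraic (kinvF St w x y) K :=
  h.isAlgebraic_kinvF_iff.2 <|
    isAlgebraic_inf_of_finite_sup_fixingAuts h1 h2 hfin (h1 (x_mem_kxF St w x y))

theorem isAlgebraic_kinvF_of_notMem_kF (h : Setting St w x y) {z : K}
    (hz : z ∈ kinvF St w x y) (hzk : z ∉ kF St w x y) :
    Algebra.IsAlgebraic (kinvF St w x y) K := by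
  refine h.isAlgebraic_kinvF_iff.2 ?_
  have hzx : z ∈ (adjoin (kF St w x y) {x}).restrictScalars ℂ :=
    restrictScalars_adjoin_kF St w x y ▸ hz.1
  have hz_bot : z ∉ (⊥ : IntermediateField (kF St w x y) K) := by
    rintro ⟨c, rfl⟩
    exact hzk c.2
  exact isAlgebraic_of_mem_adjoin_simple (E := extendScalars (kF_le_kinvF St w x y)) hz hzx hz_bot

theorem exists_mem_kinvF_notMem_kF (h : Setting St w x y)
    [hinv : Algebra.IsAlgebraic (kinvF St w x y) K] : ∃ z ∈ kinvF St w x y, z ∉ kF St w x y := by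
  by_contra! hle
  have heq : kinvF St w x y = kF St w x y := le_antisymm hle (kF_le_kinvF St w x y)
  exact h.not_algebra_isAlgebraic_kF (heq ▸ hinv)

end Setting

end Walk

/-- the orbit is finite iff there is a subfield `M` of `𝕂`, finite
Galois over `k(x)` and over `k(y)`, whose two Galois groups generate a finite group
of automorphisms of `M`, iff there is a nontrivial Galois invariant
(`k ⊊ k(x) ∩ k(y)`). -/
theorem stmt11 {K : Type} [Field K] [Algebra ℂ K]
    (St : Finset (ℤ × ℤ)) (w : ℤ × ℤ → ℂ) (x y : K)
    (hset : Setting St w x y) :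
    ((orbit St w x y).Finite ↔
      ∃ (M : IntermediateField ℂ K) (h1 : kxF St w x y ≤ M) (h2 : kyF St w x y ≤ M),
        IsGalois ↥(kxF St w x y) ↥(extendScalars h1) ∧
        FiniteDimensional ↥(kxF St w x y) ↥(extendScalars h1) ∧
        IsGalois ↥(kyF St w x y) ↥(extendScalars h2) ∧
        FiniteDimensional ↥(kyF St w x y) ↥(extendScalars h2) ∧
        ((fixingAuts (kxF St w x y) M ⊔ fixingAuts (kyF St w x y) M :
            Subgroup (↥M ≃ₐ[ℂ] ↥M)) : Set (↥M ≃ₐ[ℂ] ↥M)).Finite) ∧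
    ((orbit St w x y).Finite ↔
      ∃ z ∈ kxF St w x y ⊓ kyF St w x y, z ∉ kF St w x y) := by
  rw [hset.finite_orbit_iff_isAlgebraic_kinvF]
  refine ⟨⟨fun _ ↦ hset.exists_finite_sup_fixingAuts, ?_⟩, fun _ ↦ hset.exists_mem_kinvF_notMem_kF,
    fun ⟨_, hz, hzk⟩ ↦ hset.isAlgebraic_kinvF_of_notMem_kF hz hzk⟩
  rintro ⟨M, h1, h2, _, -, _, -, hfin⟩
  exact hset.isAlgebraic_kinvF_of_finite_sup_fixingAuts h1 h2 hfin

end QuadrantWalk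
end
end

section
/- A regular fraction H ∈ ℂ(X,Y,t) admits a Galois decoupling if and only if its evaluation H_{(x,y)} = H(x,y,1/S(x,y)) can be written as f + g with f ∈ k(x) and g ∈ k(y). -/
open IntermediateField
open scoped BigOperators Classical

set_option synthInstance.maxHeartbeats 1000000
set_option maxHeartbeats 1600000

noncomputable section

namespace QuadrantWalk

/-!
The kernel polynomial `K̃ = X^mx Y^my - t · (X^mx Y^my S)` has degree one in `t`, with coprime
coefficients, so it is prime. Pseudo-division by `K̃` in `t` leaves a remainder in `ℂ[X,Y]`, which
cannot vanish at `(x, y)` unless it is zero; hence `K̃` generates the ideal of all polynomials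
vanishing at `(x, y, 1/S(x,y))`. Two regular fractions therefore differ by `K̃` times a regular
fraction exactly when they take the same value at that point, and the values of the regular
fractions of `ℂ(X,t)` and `ℂ(Y,t)` fill the fields `k(x)` and `k(y)`.
-/

section LinearPolynomial

open MvPolynomial

variable {σ k K : Type*} [CommRing k] [CommRing K] [Algebra k K] {v : σ → K} {i : σ}

lemma eq_zero_of_mem_supported_of_aeval_eq_zero {s : Set σ}
    (hv : AlgebraicIndependent k fun j : s => v j) {P : MvPolynomial σ k}
    (hP : P ∈ supported k s) (h : aeval v P = 0) : P = 0 := by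
  rw [supported_eq_range_rename, AlgHom.mem_range] at hP
  obtain ⟨Q, rfl⟩ := hP
  rw [aeval_rename] at h
  rw [hv.eq_zero_of_aeval_eq_zero Q h, map_zero]

lemma exists_sub_X_mul_dvd_pow_mul_sub {M N : MvPolynomial σ k}
    (hM : M ∈ supported k {i}ᶜ) (hN : N ∈ supported k {i}ᶜ) (P : MvPolynomial σ k) :
    ∃ d : ℕ, ∃ R ∈ supported k {i}ᶜ, M - X i * N ∣ N ^ d * P - R := by
  induction P using MvPolynomial.induction_on with
  | C a => exact ⟨0, C a, Subalgebra.algebraMap_mem _ a, by simp⟩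
  | add P P' hP hP' =>
    obtain ⟨d, R, hR, Q, hQ⟩ := hP
    obtain ⟨d', R', hR', Q', hQ'⟩ := hP'
    exact ⟨d + d', N ^ d' * R + N ^ d * R',
      add_mem (mul_mem (pow_mem hN _) hR) (mul_mem (pow_mem hN _) hR'),
      N ^ d' * Q + N ^ d * Q', by linear_combination N ^ d' * hQ + N ^ d * hQ'⟩
  | mul_X P j hP =>
    obtain ⟨d, R, hR, Q, hQ⟩ := hP
    rcases eq_or_ne j i with rfl | hj
    · exact ⟨d + 1, M * R, mul_mem hM hR, X j * N * Q - R,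
        by linear_combination X j * N * hQ⟩
    · exact ⟨d, R * X j, mul_mem hR (Algebra.subset_adjoin ⟨j, hj, rfl⟩), Q * X j,
        by linear_combination X j * hQ⟩

lemma prime_sub_X_mul [IsDomain k] [UniqueFactorizationMonoid k] {M N : MvPolynomial σ k}
    (hM : M ∈ supported k {i}ᶜ) (hN : N ∈ supported k {i}ᶜ) (hN0 : N ≠ 0)
    (hMN : IsRelPrime M N) : Prime (M - X i * N) := by
  have hi {Q : MvPolynomial σ k} (hQ : Q ∈ supported k {i}ᶜ) : i ∉ Q.vars :=
    fun h => mem_supported.1 hQ h rfl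
  have h := irreducible_mul_X_add (-N) M i (neg_ne_zero.2 hN0) (hi (neg_mem hN)) (hi hM)
    hMN.symm.neg_left
  rw [show M - X i * N = -N * X i + M by ring]
  exact h.prime

theorem sub_X_mul_dvd_iff_aeval_eq_zero [IsDomain k] [UniqueFactorizationMonoid k]
    (hv : AlgebraicIndependent k fun j : ({i}ᶜ : Set σ) => v j) {M N : MvPolynomial σ k}
    (hM : M ∈ supported k {i}ᶜ) (hN : N ∈ supported k {i}ᶜ) (hN0 : N ≠ 0)
    (hMN : IsRelPrime M N) (hvi : v i * aeval v N = aeval v M) (P : MvPolynomial σ k) :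
    M - X i * N ∣ P ↔ aeval v P = 0 := by
  have aeval_eq_zero_of_dvd {Q : MvPolynomial σ k} (h : M - X i * N ∣ Q) : aeval v Q = 0 := by
    obtain ⟨T, rfl⟩ := h
    simp [hvi]
  refine ⟨aeval_eq_zero_of_dvd, fun hP => ?_⟩
  obtain ⟨d, R, hR, hdvd⟩ := exists_sub_X_mul_dvd_pow_mul_sub hM hN P
  have hR0 : R = 0 := eq_zero_of_mem_supported_of_aeval_eq_zero hv hR <| by
    simpa [hP] using aeval_eq_zero_of_dvd hdvd
  rw [hR0, sub_zero] at hdvd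
  refine ((prime_sub_X_mul hM hN hN0 hMN).dvd_or_dvd hdvd).resolve_left fun hNd => ?_
  exact pow_ne_zero d hN0
    (eq_zero_of_mem_supported_of_aeval_eq_zero hv (pow_mem hN d) (aeval_eq_zero_of_dvd hNd))

end LinearPolynomial

section RegularFraction

variable {R L K : Type*} [CommRing R] [Field L] [Algebra R L] [IsFractionRing R L]
  [Field K] {φ : R →+* K} {p : R}

lemma algebraMap_ne_zero_of_not_dvd {q : R} (hq : ¬ p ∣ q) : algebraMap R L q ≠ 0 :=
  (map_ne_zero_iff _ (IsFractionRing.injective R L)).2 fun h => hq (h ▸ dvd_zero p)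

lemma exists_div_eq_div_add_mul_iff (hφ : ∀ q, p ∣ q ↔ φ q = 0) {a b c d : R}
    (hb : ¬ p ∣ b) (hd : ¬ p ∣ d) :
    (∃ r s, ¬ p ∣ s ∧ algebraMap R L a / algebraMap R L b =
      algebraMap R L c / algebraMap R L d +
        algebraMap R L p * (algebraMap R L r / algebraMap R L s)) ↔
      φ a / φ b = φ c / φ d := by
  have hbL := algebraMap_ne_zero_of_not_dvd (L := L) hb
  have hdL := algebraMap_ne_zero_of_not_dvd (L := L) hd
  rw [div_eq_div_iff (mt (hφ b).2 hb) (mt (hφ d).2 hd), ← map_mul, ← map_mul, ← sub_eq_zero,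
    ← map_sub, ← hφ]
  constructor
  · rintro ⟨r, s, hs, h⟩
    have hsL := algebraMap_ne_zero_of_not_dvd (L := L) hs
    have cleared : s * (a * d - c * b) = p * (r * b * d) := by
      apply IsFractionRing.injective R L
      field_simp at h
      simp only [map_mul, map_sub]
      linear_combination h
    have hzero : φ s * φ (a * d - c * b) = 0 := by
      rw [← map_mul, ← hφ, cleared]
      exact dvd_mul_right _ _
    exact (hφ _).2 ((mul_eq_zero.1 hzero).resolve_left (mt (hφ s).2 hs))
  · rintro ⟨r, hr⟩
    refine ⟨r, b * d, ?_, ?_⟩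
    · rw [hφ, map_mul]
      exact mul_ne_zero (mt (hφ b).2 hb) (mt (hφ d).2 hd)
    · have hrL := congrArg (algebraMap R L) hr
      simp only [map_mul, map_sub] at hrL ⊢
      field_simp
      linear_combination hrL

lemma exists_div_eq_div_add_div_add_mul_iff (hφ : ∀ q, p ∣ q ↔ φ q = 0) {a b c d e f : R}
    (hb : ¬ p ∣ b) (hd : ¬ p ∣ d) (hf : ¬ p ∣ f) :
    (∃ r s, ¬ p ∣ s ∧ algebraMap R L a / algebraMap R L b =
      algebraMap R L c / algebraMap R L d + algebraMap R L e / algebraMap R L f +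
        algebraMap R L p * (algebraMap R L r / algebraMap R L s)) ↔
      φ a / φ b = φ c / φ d + φ e / φ f := by
  have hdf : ¬ p ∣ d * f := by
    rw [hφ, map_mul]
    exact mul_ne_zero (mt (hφ d).2 hd) (mt (hφ f).2 hf)
  rw [div_add_div _ _ (mt (hφ d).2 hd) (mt (hφ f).2 hf),
    div_add_div _ _ (algebraMap_ne_zero_of_not_dvd hd)
      (algebraMap_ne_zero_of_not_dvd hf)]
  simpa only [map_add, map_mul] using
    exists_div_eq_div_add_mul_iff (L := L) hφ (a := a) (c := c * f + d * e) hb hdf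

end RegularFraction

section Adjoin

open MvPolynomial

variable {k K : Type*} [Field k] [Field K] [Algebra k K]

lemma mem_adjoin_image_iff {σ : Type*} {v : σ → K} {s : Set σ} {z : K} :
    z ∈ adjoin k (v '' s) ↔ ∃ P ∈ supported k s, ∃ Q ∈ supported k s,
      aeval v Q ≠ 0 ∧ z = aeval v P / aeval v Q := by
  have adjoin_eq_map : Algebra.adjoin k (v '' s) = (supported k s).map (aeval v) := by
    rw [supported, AlgHom.map_adjoin, Set.image_image]
    simp only [aeval_X]
  simp only [mem_adjoin_iff_div, adjoin_eq_map, Subalgebra.mem_map]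
  constructor
  · rintro ⟨_, ⟨P, hP, rfl⟩, _, ⟨Q, hQ, rfl⟩, rfl⟩
    by_cases h : aeval v Q = 0
    · exact ⟨0, zero_mem _, 1, one_mem _, by simp, by simp [h]⟩
    · exact ⟨P, hP, Q, hQ, h, rfl⟩
  · rintro ⟨P, hP, Q, hQ, -, rfl⟩
    exact ⟨_, ⟨P, hP, rfl⟩, _, ⟨Q, hQ, rfl⟩, rfl⟩

lemma adjoin_pair_inv (a b : K) : adjoin k {a, b⁻¹} = adjoin k {a, b} := by
  have adjoin_inv_le (c : K) : adjoin k {a, c⁻¹} ≤ adjoin k {a, c} := by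
    rw [adjoin_le_iff, Set.pair_subset_iff]
    exact ⟨mem_adjoin_pair_left k a c, inv_mem (mem_adjoin_pair_right k a c)⟩
  exact le_antisymm (adjoin_inv_le b) (by simpa using adjoin_inv_le b⁻¹)

end Adjoin

section StepPolynomial

open MvPolynomial

lemma coeff_sum_monomial_of_injOn {ι σ R : Type*} [CommSemiring R] {s : Finset ι}
    {e : ι → σ →₀ ℕ} (he : Set.InjOn e s) (c : ι → R) {j : ι} (hj : j ∈ s) :
    coeff (e j) (∑ l ∈ s, monomial (e l) (c l)) = c j := by
  rw [coeff_sum, Finset.sum_eq_single_of_mem j hj, coeff_monomial, if_pos rfl]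
  exact fun l hl hlj => by rw [coeff_monomial, if_neg fun h => hlj (he hl hj h)]

variable {St : Finset (ℤ × ℤ)} {w : ℤ × ℤ → ℂ} {mx my : ℕ}

/-- The polynomial `X^mx * Y^my * S(X,Y)` of `ℂ[X,Y]`, seen in `ℂ[X,Y,t]`. -/
def stepPoly (St : Finset (ℤ × ℤ)) (w : ℤ × ℤ → ℂ) (mx my : ℕ) : MvPolynomial (Fin 3) ℂ :=
  ∑ p ∈ St, C (w p) * X 0 ^ (p.1 + (mx : ℤ)).toNat * X 1 ^ (p.2 + (my : ℤ)).toNat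

/-- The exponent vector of the monomial of `stepPoly` contributed by the step `p`. -/
def stepExponent (mx my : ℕ) (p : ℤ × ℤ) : Fin 3 →₀ ℕ :=
  Finsupp.single 0 (p.1 + (mx : ℤ)).toNat + Finsupp.single 1 (p.2 + (my : ℤ)).toNat

lemma kernelPoly_eq_sub (St : Finset (ℤ × ℤ)) (w : ℤ × ℤ → ℂ) (mx my : ℕ) :
    kernelPoly St w mx my = X 0 ^ mx * X 1 ^ my - X 2 * stepPoly St w mx my := rfl

lemma stepPoly_eq_sum_monomial (St : Finset (ℤ × ℤ)) (w : ℤ × ℤ → ℂ) (mx my : ℕ) :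
    stepPoly St w mx my = ∑ p ∈ St, monomial (stepExponent mx my p) (w p) := by
  refine Finset.sum_congr rfl fun p _ => ?_
  rw [stepExponent, X_pow_eq_monomial, X_pow_eq_monomial, mul_assoc, monomial_mul, one_mul,
    C_mul_monomial, mul_one]

lemma X_mem_supported_compl_two {i : Fin 3} (hi : i ≠ 2) :
    (X i : MvPolynomial (Fin 3) ℂ) ∈ supported ℂ {2}ᶜ :=
  X_mem_supported.2 hi

lemma stepPoly_mem_supported (St : Finset (ℤ × ℤ)) (w : ℤ × ℤ → ℂ) (mx my : ℕ) :
    stepPoly St w mx my ∈ supported ℂ {2}ᶜ :=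
  sum_mem fun p _ => mul_mem (mul_mem (Subalgebra.algebraMap_mem _ (w p))
    (pow_mem (X_mem_supported_compl_two (by decide)) _))
    (pow_mem (X_mem_supported_compl_two (by decide)) _)

lemma ExponentBounds.injOn_stepExponent (hb : ExponentBounds St mx my) :
    Set.InjOn (stepExponent mx my) St := by
  intro p hp q hq h
  have hX := DFunLike.congr_fun h 0
  have hY := DFunLike.congr_fun h 1
  simp only [stepExponent, Finsupp.coe_add, Pi.add_apply, Finsupp.single_eq_same, ne_eq,
    zero_ne_one, not_false_eq_true, Finsupp.single_eq_of_ne, add_zero, one_ne_zero,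
    zero_add] at hX hY
  have := hb.lowerX p hp
  have := hb.lowerX q hq
  have := hb.lowerY p hp
  have := hb.lowerY q hq
  exact Prod.ext (by lia) (by lia)

lemma not_X_dvd_stepPoly (hw : ∀ p ∈ St, w p ≠ 0) (hb : ExponentBounds St mx my)
    {p : ℤ × ℤ} (hp : p ∈ St) {i : Fin 3} (hi : stepExponent mx my p i = 0) :
    ¬ X i ∣ stepPoly St w mx my := by
  rintro ⟨Q, hQ⟩
  apply hw p hp
  rw [← coeff_sum_monomial_of_injOn hb.injOn_stepExponent w hp, ← stepPoly_eq_sum_monomial, hQ,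
    coeff_X_mul', if_neg (Finsupp.notMem_support_iff.2 hi)]

lemma not_X_zero_dvd_stepPoly (hw : ∀ p ∈ St, w p ≠ 0) (hb : ExponentBounds St mx my) :
    ¬ X 0 ∣ stepPoly St w mx my := by
  obtain ⟨p, hp, h⟩ := hb.attainX
  exact not_X_dvd_stepPoly hw hb hp (by simp [stepExponent, h])

lemma not_X_one_dvd_stepPoly (hw : ∀ p ∈ St, w p ≠ 0) (hb : ExponentBounds St mx my) :
    ¬ X 1 ∣ stepPoly St w mx my := by
  obtain ⟨p, hp, h⟩ := hb.attainY
  exact not_X_dvd_stepPoly hw hb hp (by simp [stepExponent, h])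

lemma stepPoly_ne_zero (hw : ∀ p ∈ St, w p ≠ 0) (hb : ExponentBounds St mx my) :
    stepPoly St w mx my ≠ 0 :=
  fun h => not_X_zero_dvd_stepPoly hw hb (h ▸ dvd_zero _)

lemma isRelPrime_stepPoly (hw : ∀ p ∈ St, w p ≠ 0) (hb : ExponentBounds St mx my) :
    IsRelPrime (X 0 ^ mx * X 1 ^ my) (stepPoly St w mx my) := by
  have isRelPrime_X {i : Fin 3} (hi : ¬ X i ∣ stepPoly St w mx my) :
      IsRelPrime (X i) (stepPoly St w mx my) :=
    X_prime.irreducible.isRelPrime_iff_not_dvd.2 hi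
  exact (isRelPrime_X (not_X_zero_dvd_stepPoly hw hb)).pow_left.mul_left
    (isRelPrime_X (not_X_one_dvd_stepPoly hw hb)).pow_left

end StepPolynomial

section Evaluation

open MvPolynomial

variable {K : Type} [Field K] [Algebra ℂ K] {St : Finset (ℤ × ℤ)} {w : ℤ × ℤ → ℂ} {x y : K}
  {mx my : ℕ}

/-- The point `(x, y, 1/S(x,y))` at which fractions in `ℂ(X,Y,t)` are evaluated, so that
`evalXY` is `aeval (kernelPoint St w x y)`. -/
def kernelPoint (St : Finset (ℤ × ℤ)) (w : ℤ × ℤ → ℂ) (x y : K) : Fin 3 → K :=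
  ![x, y, (stepEval St w x y)⁻¹]

lemma algebraicIndependent_kernelPoint (hxy : AlgebraicIndependent ℂ ![x, y]) :
    AlgebraicIndependent ℂ fun j : ({2}ᶜ : Set (Fin 3)) => kernelPoint St w x y j := by
  refine (algebraicIndependent_equiv' (finSuccAboveEquiv 2) ?_).1 hxy
  ext i
  fin_cases i <;> rfl

lemma aeval_kernelPoint_stepPoly (hx : x ≠ 0) (hy : y ≠ 0) (hb : ExponentBounds St mx my) :
    aeval (kernelPoint St w x y) (stepPoly St w mx my) =
      x ^ mx * y ^ my * stepEval St w x y := by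
  have pow_toNat {u : K} (hu : u ≠ 0) {i : ℤ} {m : ℕ} (h : -(m : ℤ) ≤ i) :
      u ^ (i + (m : ℤ)).toNat = u ^ i * u ^ m := by
    rw [← zpow_natCast, Int.toNat_of_nonneg (by lia), zpow_add₀ hu, zpow_natCast]
  rw [stepPoly, stepEval, map_sum, Finset.mul_sum]
  refine Finset.sum_congr rfl fun p hp => ?_
  simp only [map_mul, map_pow, aeval_X, aeval_C, kernelPoint, Matrix.cons_val_zero,
    Matrix.cons_val_one, pow_toNat hx (hb.lowerX p hp), pow_toNat hy (hb.lowerY p hp)]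
  ring

theorem kernelPoly_dvd_iff_aeval_eq_zero (hw : ∀ p ∈ St, w p ≠ 0)
    (hxy : AlgebraicIndependent ℂ ![x, y]) (hb : ExponentBounds St mx my)
    (P : MvPolynomial (Fin 3) ℂ) :
    kernelPoly St w mx my ∣ P ↔ aeval (kernelPoint St w x y) P = 0 := by
  have hv := algebraicIndependent_kernelPoint (St := St) (w := w) hxy
  have hx : x ≠ 0 := hxy.ne_zero 0
  have hy : y ≠ 0 := hxy.ne_zero 1
  have hM : (X 0 ^ mx * X 1 ^ my : MvPolynomial (Fin 3) ℂ) ∈ supported ℂ {2}ᶜ :=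
    mul_mem (pow_mem (X_mem_supported_compl_two (by decide)) _)
      (pow_mem (X_mem_supported_compl_two (by decide)) _)
  have hN := stepPoly_mem_supported St w mx my
  have hN0 := stepPoly_ne_zero hw hb
  have eval_stepPoly := aeval_kernelPoint_stepPoly (w := w) hx hy hb
  have hS : stepEval St w x y ≠ 0 := fun h => hN0 <|
    eq_zero_of_mem_supported_of_aeval_eq_zero hv hN (by rw [eval_stepPoly, h, mul_zero])
  rw [kernelPoly_eq_sub]
  refine sub_X_mul_dvd_iff_aeval_eq_zero hv hM hN hN0 (isRelPrime_stepPoly hw hb) ?_ P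
  rw [eval_stepPoly]
  simp only [kernelPoint, map_mul, map_pow, aeval_X, Matrix.cons_val]
  field_simp

lemma regRange_eq_adjoin (hw : ∀ p ∈ St, w p ≠ 0) (hxy : AlgebraicIndependent ℂ ![x, y])
    (hb : ExponentBounds St mx my) (s : Set (Fin 3)) :
    regRange St w x y mx my s = adjoin ℂ (kernelPoint St w x y '' s) := by
  ext z
  simp only [SetLike.mem_coe, mem_adjoin_image_iff, ne_eq,
    ← kernelPoly_dvd_iff_aeval_eq_zero hw hxy hb, ← exists_and_left]
  rfl

lemma regRange_zero_two_eq_kxF (hw : ∀ p ∈ St, w p ≠ 0)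
    (hxy : AlgebraicIndependent ℂ ![x, y]) (hb : ExponentBounds St mx my) :
    regRange St w x y mx my {0, 2} = kxF St w x y := by
  rw [regRange_eq_adjoin hw hxy hb, Set.image_pair]
  exact congrArg _ (adjoin_pair_inv x (stepEval St w x y))

lemma regRange_one_two_eq_kyF (hw : ∀ p ∈ St, w p ≠ 0)
    (hxy : AlgebraicIndependent ℂ ![x, y]) (hb : ExponentBounds St mx my) :
    regRange St w x y mx my {1, 2} = kyF St w x y := by
  rw [regRange_eq_adjoin hw hxy hb, Set.image_pair]
  exact congrArg _ (adjoin_pair_inv y (stepEval St w x y))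

theorem admitsDecoupling_iff_exists_regRange (hw : ∀ p ∈ St, w p ≠ 0)
    (hxy : AlgebraicIndependent ℂ ![x, y]) (hb : ExponentBounds St mx my)
    {A B : MvPolynomial (Fin 3) ℂ} (hB : ¬ kernelPoly St w mx my ∣ B) :
    AdmitsDecoupling St w mx my A B ↔
      ∃ f ∈ regRange St w x y mx my {0, 2}, ∃ g ∈ regRange St w x y mx my {1, 2},
        fracEval St w x y A B (x, y) = f + g := by
  have decomposition_iff {F₁ F₂ G₁ G₂ : MvPolynomial (Fin 3) ℂ}
      (hF : ¬ kernelPoly St w mx my ∣ F₂) (hG : ¬ kernelPoly St w mx my ∣ G₂) :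
      (∃ R₁ R₂, ¬ kernelPoly St w mx my ∣ R₂ ∧ toFF A / toFF B =
        toFF F₁ / toFF F₂ + toFF G₁ / toFF G₂ +
          toFF (kernelPoly St w mx my) * (toFF R₁ / toFF R₂)) ↔
      fracEval St w x y A B (x, y) = evalXY St w x y F₁ / evalXY St w x y F₂ +
        evalXY St w x y G₁ / evalXY St w x y G₂ :=
    exists_div_eq_div_add_div_add_mul_iff (φ := (aeval (kernelPoint St w x y)).toRingHom)
      (kernelPoly_dvd_iff_aeval_eq_zero hw hxy hb) hB hF hG
  constructor
  · rintro ⟨F₁, F₂, G₁, G₂, R₁, R₂, hF₁, hF₂, hG₁, hG₂, hF, hG, hR, h⟩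
    exact ⟨_, ⟨F₁, F₂, hF₁, hF₂, hF, rfl⟩, _, ⟨G₁, G₂, hG₁, hG₂, hG, rfl⟩,
      (decomposition_iff hF hG).1 ⟨R₁, R₂, hR, h⟩⟩
  · rintro ⟨_, ⟨F₁, F₂, hF₁, hF₂, hF, rfl⟩, _, ⟨G₁, G₂, hG₁, hG₂, hG, rfl⟩, h⟩
    obtain ⟨R₁, R₂, hR, h⟩ := (decomposition_iff hF hG).2 h
    exact ⟨F₁, F₂, G₁, G₂, R₁, R₂, hF₁, hF₂, hG₁, hG₂, hF, hG, hR, h⟩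

end Evaluation

theorem stmt13_general {K : Type} [Field K] [Algebra ℂ K] {St : Finset (ℤ × ℤ)}
    {w : ℤ × ℤ → ℂ} {x y : K} {mx my : ℕ} (hw : ∀ p ∈ St, w p ≠ 0)
    (hxy : AlgebraicIndependent ℂ ![x, y]) (hb : ExponentBounds St mx my)
    {A B : MvPolynomial (Fin 3) ℂ} (hB : ¬ kernelPoly St w mx my ∣ B) :
    AdmitsDecoupling St w mx my A B ↔
      ∃ f ∈ kxF St w x y, ∃ g ∈ kyF St w x y,
        fracEval St w x y A B (x, y) = f + g := by
  simpa only [regRange_zero_two_eq_kxF hw hxy hb, regRange_one_two_eq_kyF hw hxy hb,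
    SetLike.mem_coe] using admitsDecoupling_iff_exists_regRange hw hxy hb hB

/-- a regular fraction `H = A/B` admits a Galois decoupling iff its
evaluation `H_{(x,y)} = H(x,y,1/S(x,y))` can be written as `f + g` with `f ∈ k(x)`
and `g ∈ k(y)`. -/
theorem stmt13 {K : Type} [Field K] [Algebra ℂ K]
    (St : Finset (ℤ × ℤ)) (w : ℤ × ℤ → ℂ) (x y : K) (mx my : ℕ)
    (hset : Setting St w x y) (hb : ExponentBounds St mx my)
    (A B : MvPolynomial (Fin 3) ℂ) (hAB : IsRelPrime A B)
    (hB : ¬ kernelPoly St w mx my ∣ B) :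
    AdmitsDecoupling St w mx my A B ↔
      ∃ f ∈ kxF St w x y, ∃ g ∈ kyF St w x y,
        fracEval St w x y A B (x, y) = f + g :=
  stmt13_general hset.weight_ne hset.indep hb hB

end QuadrantWalk
end
end
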